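/- arXiv:2510.17112 — 2 statements merged into one kernel-verified Lean document; each statement's English description precedes it below -/
import Mathlib

section
/- For every positive integer m, the Minkowski dimension of E_m^* equals m/(m+1); equivalently, lim_{δ→0⁺} log λ(V_δ(E_m^*)) / log δ = 1/(m+1). -/
open MeasureTheory Filter Set

/-- The closed `δ`-neighbourhood `V_δ(Ω) = {x : ∃ y ∈ Ω, |x - y| ≤ δ}`. -/
def closedNbhd (Ω : Set ℝ) (δ : ℝ) : Set ℝ := {x : ℝ | ∃ y ∈ Ω, |x - y| ≤ δ}

/-- One step of the Engel expansion algorithm: `x ↦ ⌈1/x⌉ · x - 1`. -/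
noncomputable def engelStep (x : ℝ) : ℝ := (⌈1 / x⌉ : ℝ) * x - 1

/-- The Engel algorithm iterates: `engelIter x i = x_{i+1}`, where `x₁ = x` and
`x_{i+1} = aᵢ xᵢ - 1` with `aᵢ = ⌈1/xᵢ⌉`. -/
noncomputable def engelIter (x : ℝ) (i : ℕ) : ℝ := engelStep^[i] x

/-- The Engel fraction of `x` has length `k`: the algorithm stays positive for the
first `k` steps and terminates with `x_{k+1} = 0`. -/
def engelLength (x : ℝ) (k : ℕ) : Prop :=
  (∀ i, i < k → 0 < engelIter x i) ∧ engelIter x k = 0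

/-- `E_m^*`: the set of rationals `x ∈ (0,1]` whose Engel fraction has length `m`. -/
def EstarSet (m : ℕ) : Set ℝ :=
  {x : ℝ | (∃ q : ℚ, (q : ℝ) = x) ∧ x ∈ Set.Ioc (0 : ℝ) 1 ∧ engelLength x m}

/-- Superset used for the upper bound. -/
def auxS : ℕ → Set ℝ
  | 0 => {0}
  | (k+1) => {x : ℝ | ∃ a : ℕ, 1 ≤ a ∧ ∃ y ∈ auxS k, 0 ≤ y ∧ y ≤ 1 ∧ x = (1 + y) / a}

lemma engelIter_succ' (x : ℝ) (i : ℕ) : engelIter x (i+1) = engelIter (engelStep x) i := by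
  simp [engelIter]

lemma auxS_of_engel (m : ℕ) : ∀ x : ℝ, x ≤ 1 → engelLength x m → x ∈ auxS m := by
  induction m with
  | zero =>
    intro x hx h
    have := h.2
    simpa [engelIter, auxS] using this
  | succ k ih =>
    intro x hx h
    have hx0 : 0 < x := by simpa [engelIter] using h.1 0 (by omega)
    have hi : 0 < 1 / x := by positivity
    have hc0 : 0 < ⌈1 / x⌉ := Int.ceil_pos.2 hi
    have h1 : 1 / x ≤ (⌈1 / x⌉ : ℝ) := Int.le_ceil _
    have h2 : (⌈1 / x⌉ : ℝ) < 1 / x + 1 := Int.ceil_lt_add_one _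
    have h1' : 1 ≤ (⌈1 / x⌉ : ℝ) * x := by
      rwa [div_le_iff₀ hx0] at h1
    have h2' : (⌈1 / x⌉ : ℝ) * x < 1 + x := by
      have := mul_lt_mul_of_pos_right h2 hx0
      have e : (1 / x + 1) * x = 1 + x := by field_simp
      linarith
    obtain ⟨a, ha⟩ : ∃ a : ℕ, (a : ℤ) = ⌈1 / x⌉ := ⟨_, Int.toNat_of_nonneg hc0.le⟩
    have haR : (⌈1 / x⌉ : ℝ) = (a : ℝ) := by rw [← ha]; simp
    have ha1 : 1 ≤ a := by omega
    have hstep : engelStep x = a * x - 1 := by rw [engelStep, haR]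
    rw [haR] at h1' h2'
    refine ⟨a, ha1, engelStep x, ih _ (by linarith) ⟨?_, ?_⟩, by linarith, by linarith, ?_⟩
    · intro i hi
      rw [← engelIter_succ']
      exact h.1 _ (by omega)
    · rw [← engelIter_succ']
      exact h.2
    · have : (0 : ℝ) < a := by exact_mod_cast ha1
      rw [hstep]; field_simp; ring

lemma sum_rpow_bound (k : ℕ) (N : ℕ) :
    ∑ a ∈ Finset.Icc 1 N, (1 / (a : ℝ)) * (a : ℝ) ^ ((1 : ℝ) / (k + 1)) ≤
      (k + 1) * (N : ℝ) ^ ((1 : ℝ) / (k + 1)) := by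
  have hs0 : (0 : ℝ) < 1 / (k + 1) := by positivity
  have hs1 : (1 : ℝ) / (k + 1) ≤ 1 := by
    rw [div_le_one (by positivity)]
    have : (0 : ℝ) ≤ k := by positivity
    linarith
  induction N with
  | zero => simp; positivity
  | succ n ih =>
    rw [Finset.sum_Icc_succ_top (by omega)]
    set s : ℝ := 1 / (k + 1) with hs
    have hk : ((k : ℝ) + 1) * s = 1 := by rw [hs]; field_simp
    have hn : (0 : ℝ) < (n : ℝ) + 1 := by positivity
    have hb := rpow_one_add_le_one_add_mul_self (s := -1 / ((n : ℝ) + 1)) (p := s)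
      (by rw [le_div_iff₀ hn]; have : (0 : ℝ) ≤ n := by positivity
          linarith) hs0.le hs1
    have e : (1 + -1 / ((n : ℝ) + 1)) = n / (n + 1) := by field_simp; ring
    rw [e, Real.div_rpow (by positivity) hn.le, div_le_iff₀ (by positivity)] at hb
    push_cast
    set X := ((n : ℝ) + 1) ^ s
    have h3 : ((k : ℝ) + 1) * (n : ℝ) ^ s ≤ (k + 1) * ((1 + s * (-1 / (n + 1))) * X) :=
      mul_le_mul_of_nonneg_left hb (by positivity)
    have h4 : ((k : ℝ) + 1) * ((1 + s * (-1 / (n + 1))) * X)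
        = (k + 1) * X - (((k : ℝ) + 1) * s) * (1 / (n + 1)) * X := by ring
    rw [h4, hk] at h3
    linarith

lemma vol_scale (S : Set ℝ) (a : ℕ) (ha : 1 ≤ a) (δ : ℝ) :
    volume {x : ℝ | ∃ y ∈ S, |x - (1 + y) / a| ≤ δ} =
      ENNReal.ofReal (1 / a) * volume (closedNbhd S (a * δ)) := by
  have ha0 : (0 : ℝ) < a := by exact_mod_cast ha
  have : {x : ℝ | ∃ y ∈ S, |x - (1 + y) / a| ≤ δ} =
      (fun x => (a : ℝ) * x) ⁻¹' ((fun x => x + (-1)) ⁻¹' (closedNbhd S (a * δ))) := by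
    ext x
    simp only [closedNbhd, mem_ofPred_eq, mem_preimage]
    refine exists_congr fun y => and_congr_right fun _ => ?_
    have : (a : ℝ) * x + -1 - y = a * (x - (1 + y) / a) := by field_simp; ring
    rw [this, abs_mul, abs_of_pos ha0, mul_le_mul_iff_right₀ ha0]
  rw [this, Real.volume_preimage_mul_left ha0.ne', measure_preimage_add_right]
  rw [abs_of_pos (by positivity), one_div]

lemma upper_bound (m : ℕ) : ∃ C : ℝ, 0 < C ∧ ∀ t : ℝ, 0 < t → t ≤ 1 →
    volume (closedNbhd (auxS m) (t ^ (m+1))) ≤ ENNReal.ofReal (C * t) := by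
  induction m with
  | zero =>
    refine ⟨2, by norm_num, fun t ht _ => ?_⟩
    have : closedNbhd (auxS 0) (t ^ (0+1)) ⊆ Icc (-t) t := by
      rintro x ⟨y, hy, hxy⟩
      simp only [auxS, mem_singleton_iff] at hy
      subst hy
      simpa [abs_le] using hxy
    refine (measure_mono this).trans ?_
    rw [Real.volume_Icc]
    apply ENNReal.ofReal_le_ofReal
    linarith
  | succ k ih =>
    obtain ⟨C, hC, ih⟩ := ih
    refine ⟨C * (k + 1) + 6, by positivity, fun t ht ht1 => ?_⟩
    set δ := t ^ (k + 1 + 1) with hδ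
    have hδ0 : 0 < δ := by positivity
    have hδt : δ ≤ t := by
      rw [hδ]; exact pow_le_of_le_one ht.le ht1 (by omega)
    have hit : 1 ≤ 1 / t := by rw [le_div_iff₀ ht]; linarith
    obtain ⟨N, hN⟩ : ∃ N, N = ⌊1 / t⌋₊ := ⟨_, rfl⟩
    have hN1 : 1 ≤ N := by rw [hN]; exact Nat.one_le_floor_iff _ |>.2 hit
    have hN0 : (1 : ℝ) ≤ N := by exact_mod_cast hN1
    have hNt : (N : ℝ) * t ≤ 1 := by
      rw [← le_div_iff₀ ht, hN]; exact Nat.floor_le (by positivity)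
    have hN2 : 1 / (N : ℝ) ≤ 2 * t := by
      have : 1 / t < N + 1 := by rw [hN]; exact Nat.lt_floor_add_one _
      rw [div_lt_iff₀ ht] at this
      rw [div_le_iff₀ (by linarith)]
      nlinarith
    have hsub : closedNbhd (auxS (k+1)) δ ⊆
        (⋃ a ∈ Finset.Icc 1 N, {x : ℝ | ∃ y ∈ auxS k, |x - (1 + y) / (a : ℕ)| ≤ δ}) ∪
          Icc (-δ) (2 / N + δ) := by
      rintro x ⟨z, ⟨a, ha, y, hy, hy0, hy1, rfl⟩, hx⟩
      by_cases haN : a ≤ N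
      · left
        simp only [mem_iUnion, mem_ofPred_eq, Finset.mem_Icc]
        exact ⟨a, ⟨ha, haN⟩, y, hy, hx⟩
      · right
        have h1 : (1 + y) / (a : ℝ) ≤ 2 / N := by
          have : (N : ℝ) ≤ a := by exact_mod_cast (by omega : N ≤ a)
          apply div_le_div₀ <;> linarith
        have h2 : 0 ≤ (1 + y) / (a : ℝ) := by positivity
        rw [abs_le] at hx
        constructor <;> linarith [hx.1, hx.2]
    set s : ℝ := 1 / (k + 1) with hs
    have hterm : ∀ a ∈ Finset.Icc 1 N,
        volume {x : ℝ | ∃ y ∈ auxS k, |x - (1 + y) / (a : ℕ)| ≤ δ} ≤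
        ENNReal.ofReal ((1 / (a : ℝ) * (a : ℝ) ^ s) * (C * δ ^ s)) := by
      intro a ha
      rw [Finset.mem_Icc] at ha
      have ha0 : (0 : ℝ) < a := by exact_mod_cast ha.1
      have haN : (a : ℝ) ≤ N := by exact_mod_cast ha.2
      rw [vol_scale _ _ ha.1]
      have hle : (a : ℝ) * δ ≤ 1 := by
        have : (a : ℝ) * δ ≤ N * t := by gcongr
        linarith
      have := ih ((a * δ) ^ s) (by positivity) (Real.rpow_le_one (by positivity) hle (by positivity))
      have e : ((a * δ) ^ s) ^ (k + 1) = a * δ := by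
        rw [hs, ← Real.rpow_natCast, ← Real.rpow_mul (by positivity)]
        push_cast
        rw [one_div_mul_cancel (by positivity), Real.rpow_one]
      rw [e] at this
      calc _ ≤ ENNReal.ofReal (1 / a) * ENNReal.ofReal (C * (a * δ) ^ s) := by gcongr
        _ = _ := by
          rw [← ENNReal.ofReal_mul (by positivity), Real.mul_rpow ha0.le hδ0.le]
          congr 1; ring
    have hfin : (N : ℝ) ^ s * δ ^ s ≤ t := by
      rw [← Real.mul_rpow (by positivity) hδ0.le]
      have h1 : (N : ℝ) * δ ≤ t ^ (k + 1) := by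
        have : (N : ℝ) * δ = N * t * t ^ (k + 1) := by rw [hδ]; ring
        rw [this]
        have : 0 < t ^ (k+1) := by positivity
        nlinarith
      calc _ ≤ (t ^ (k+1)) ^ s := by
            apply Real.rpow_le_rpow (by positivity) h1 (by positivity)
        _ = t := by
          rw [hs, ← Real.rpow_natCast, ← Real.rpow_mul (by positivity)]
          push_cast
          rw [mul_one_div_cancel (by positivity), Real.rpow_one]
    calc _ ≤ _ := measure_mono hsub
      _ ≤ _ := measure_union_le _ _
      _ ≤ (∑ a ∈ Finset.Icc 1 N, ENNReal.ofReal ((1 / (a : ℝ) * (a : ℝ) ^ s) * (C * δ ^ s)))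
          + ENNReal.ofReal (2 / N + 2 * δ) := by
        refine add_le_add ((measure_biUnion_finset_le _ _).trans (Finset.sum_le_sum hterm)) ?_
        rw [Real.volume_Icc]
        apply ENNReal.ofReal_le_ofReal
        linarith
      _ = ENNReal.ofReal ((∑ a ∈ Finset.Icc 1 N, (1 / (a : ℝ) * (a : ℝ) ^ s)) * (C * δ ^ s)
          + (2 / N + 2 * δ)) := by
        rw [← ENNReal.ofReal_sum_of_nonneg (fun i _ => by positivity), ← Finset.sum_mul,
          ← ENNReal.ofReal_add _ (by positivity)]
        exact mul_nonneg (Finset.sum_nonneg fun i _ => by positivity) (by positivity)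
      _ ≤ _ := by
        apply ENNReal.ofReal_le_ofReal
        have h1 := mul_le_mul_of_nonneg_right (sum_rpow_bound k N)
          (by positivity : 0 ≤ C * δ ^ s)
        rw [← hs] at h1
        have h2 : (((k : ℝ) + 1) * (N : ℝ) ^ s) * (C * δ ^ s) ≤ C * (k + 1) * t := by
          have : (((k : ℝ) + 1) * (N : ℝ) ^ s) * (C * δ ^ s) =
            C * (k + 1) * ((N : ℝ) ^ s * δ ^ s) := by ring
          rw [this]
          gcongr
        have h3 : 2 / (N : ℝ) = 2 * (1 / N) := by ring
        rw [h3]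
        linarith

/-- Sums with digits `A ≤ a₁ ≤ ⋯ ≤ aₖ ≤ L`. -/
def auxE (L : ℕ) : ℕ → ℕ → Set ℝ
  | 0, _ => {0}
  | (k+1), A => {x : ℝ | ∃ a : ℕ, A ≤ a ∧ a ≤ L ∧ ∃ y ∈ auxE L k a, x = (1 + y) / a}

lemma auxE_bound (L k : ℕ) : ∀ A, 2 ≤ A → ∀ x ∈ auxE L k A, 0 ≤ x ∧ ((A : ℝ) - 1) * x < 1 := by
  induction k with
  | zero =>
    intro A hA x hx
    simp only [auxE, mem_singleton_iff] at hx
    subst hx; simp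
  | succ k ih =>
    rintro A hA x ⟨a, hAa, haL, y, hy, rfl⟩
    obtain ⟨h0, h1⟩ := ih a (by omega) y hy
    have hA' : (2 : ℝ) ≤ A := by exact_mod_cast hA
    have ha' : (A : ℝ) ≤ a := by exact_mod_cast hAa
    have ha0 : (0 : ℝ) < a := by linarith
    refine ⟨by positivity, ?_⟩
    rw [← mul_div_assoc, div_lt_one ha0]
    nlinarith

lemma ceil_eq (a : ℕ) (ha : 2 ≤ a) (y : ℝ) (h0 : 0 ≤ y) (h1 : ((a : ℝ) - 1) * y < 1) :
    ⌈1 / ((1 + y) / (a : ℝ))⌉ = (a : ℤ) := by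
  have ha0 : (2 : ℝ) ≤ a := by exact_mod_cast ha
  rw [Int.ceil_eq_iff, one_div_div]
  push_cast
  rw [lt_div_iff₀ (by linarith), div_le_iff₀ (by linarith)]
  constructor <;> nlinarith

lemma step_eq (a : ℕ) (ha : 2 ≤ a) (y : ℝ) (h0 : 0 ≤ y) (h1 : ((a : ℝ) - 1) * y < 1) :
    engelStep ((1 + y) / a) = y := by
  have ha0 : (2 : ℝ) ≤ a := by exact_mod_cast ha
  rw [engelStep, ceil_eq a ha y h0 h1]
  push_cast
  field_simp; ring

lemma auxE_length (L k : ℕ) : ∀ A, 2 ≤ A → ∀ x ∈ auxE L k A, engelLength x k := by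
  induction k with
  | zero =>
    intro A hA x hx
    simp only [auxE, mem_singleton_iff] at hx
    subst hx; simp [engelLength, engelIter]
  | succ k ih =>
    rintro A hA x ⟨a, hAa, haL, y, hy, rfl⟩
    obtain ⟨h0, h1⟩ := auxE_bound L k a (by omega) y hy
    have h := ih a (by omega) y hy
    have hs := step_eq a (by omega) y h0 h1
    have ha0 : (0 : ℝ) < a := by exact_mod_cast (by omega : 0 < a)
    constructor
    · intro i hi
      cases i with
      | zero => simp only [engelIter, Function.iterate_zero, id]; positivity
      | succ i => rw [engelIter_succ', hs]; exact h.1 i (by omega)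
    · rw [engelIter_succ', hs]; exact h.2

lemma auxE_rat (L k : ℕ) : ∀ A, 2 ≤ A → ∀ x ∈ auxE L k A,
    ∃ n D : ℕ, 0 < D ∧ D ≤ L ^ k ∧ x = (n : ℝ) / D := by
  induction k with
  | zero =>
    intro A hA x hx
    simp only [auxE, mem_singleton_iff] at hx
    exact ⟨0, 1, by norm_num, by norm_num, by simp [hx]⟩
  | succ k ih =>
    rintro A hA x ⟨a, hAa, haL, y, hy, rfl⟩
    obtain ⟨n, D, hD, hDL, rfl⟩ := ih a (by omega) y hy
    refine ⟨D + n, D * a, Nat.mul_pos hD (by omega), ?_, ?_⟩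
    · rw [pow_succ]; exact Nat.mul_le_mul hDL haL
    · have : (0 : ℝ) < D := by exact_mod_cast hD
      have : (0 : ℝ) < a := by exact_mod_cast (by omega : 0 < a)
      push_cast; field_simp

lemma auxE_gap (L k a a' : ℕ) (ha : 2 ≤ a) (haa : a < a') (haL : a' ≤ L) (y x' : ℝ) (hy : 0 ≤ y)
    (hx' : x' ∈ auxE L k a') : 1 / (L : ℝ) ^ (k + 1) ≤ (1 + y) / a - x' := by
  obtain ⟨h0, h1⟩ := auxE_bound L k a' (by omega) x' hx'
  obtain ⟨n, D, hD, hDL, rfl⟩ := auxE_rat L k a' (by omega) x' hx'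
  have hD0 : (0 : ℝ) < D := by exact_mod_cast hD
  have ha0 : (0 : ℝ) < a := by exact_mod_cast (by omega : 0 < a)
  have haa' : (a : ℝ) + 1 ≤ a' := by exact_mod_cast haa
  have h2 : (a : ℝ) * n < D := by
    have : (a : ℝ) * (n / D) < 1 := by nlinarith
    rwa [← mul_div_assoc, div_lt_one hD0] at this
  have h3 : (a : ℝ) * n + 1 ≤ D := by exact_mod_cast h2
  have h4 : (1 : ℝ) / (a * D) ≤ 1 / a - n / D := by
    rw [div_sub_div _ _ ha0.ne' hD0.ne']
    gcongr; linarith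
  have h5 : (1 : ℝ) / a ≤ (1 + y) / a := by gcongr; linarith
  have h6 : 1 / (L : ℝ) ^ (k + 1) ≤ 1 / (a * D) := by
    apply one_div_le_one_div_of_le (by positivity)
    have : (D : ℝ) ≤ (L : ℝ) ^ k := by exact_mod_cast hDL
    have : (a : ℝ) ≤ L := by exact_mod_cast (by omega : a ≤ L)
    rw [pow_succ, mul_comm]
    gcongr
  linarith

lemma auxE_mono (L k : ℕ) (A B : ℕ) (h : A ≤ B) : auxE L k B ⊆ auxE L k A := by
  cases k with
  | zero => intro x hx; exact hx
  | succ k =>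
    rintro x ⟨a, h1, h2⟩
    exact ⟨a, h.trans h1, h2⟩

lemma auxE_sep (L k : ℕ) : ∀ A, 2 ≤ A → ∀ x ∈ auxE L k A, ∀ x' ∈ auxE L k A, x ≠ x' →
    1 / (L : ℝ) ^ (k + 1) ≤ |x - x'| := by
  induction k with
  | zero =>
    intro A hA x hx x' hx' hne
    simp only [auxE, mem_singleton_iff] at hx hx'
    exact absurd (hx.trans hx'.symm) hne
  | succ k ih =>
    rintro A hA x ⟨a, hAa, haL, y, hy, rfl⟩ x' ⟨a', hAa', haL', y', hy', rfl⟩ hne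
    have hx : (1 + y) / (a : ℝ) ∈ auxE L (k+1) a := ⟨a, le_rfl, haL, y, hy, rfl⟩
    have hx' : (1 + y') / (a' : ℝ) ∈ auxE L (k+1) a' := ⟨a', le_rfl, haL', y', hy', rfl⟩
    rcases lt_trichotomy a a' with h | h | h
    · exact (auxE_gap L (k+1) a a' (by omega) h haL' y _
        (auxE_bound L k a (by omega) y hy).1 hx').trans (le_abs_self _)
    · subst h
      have ha0 : (0 : ℝ) < a := by exact_mod_cast (by omega : 0 < a)
      have hyy : y ≠ y' := by rintro rfl; exact hne rfl
      have := ih a (by omega) y hy y' hy' hyy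
      have e : (1 + y) / (a : ℝ) - (1 + y') / a = (y - y') / a := by field_simp; ring
      rw [e, abs_div, abs_of_pos ha0]
      have hL : (a : ℝ) ≤ L := by exact_mod_cast haL
      have hL0 : (0 : ℝ) < L := by linarith
      calc 1 / (L : ℝ) ^ (k + 1 + 1) = (1 / (L : ℝ) ^ (k + 1)) / L := by
            rw [pow_succ]; field_simp
        _ ≤ _ := by gcongr
    · rw [abs_sub_comm]
      exact (auxE_gap L (k+1) a' a (by omega) h haL y' _
        (auxE_bound L k a' (by omega) y' hy').1 hx).trans (le_abs_self _)

lemma auxE_count (L N k : ℕ) : ∀ A, 2 ≤ A → A + k * N ≤ L →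
    ∃ P : Finset ℝ, P.card = N ^ k ∧ ∀ x ∈ P, x ∈ auxE L k A := by
  induction k with
  | zero => intro A hA h; exact ⟨{0}, by simp, by simp [auxE]⟩
  | succ k ih =>
    intro A hA h
    have hkN : (k + 1) * N = k * N + N := by ring
    obtain ⟨P, hP, hPE⟩ := ih (A + N) (by omega) (by omega)
    have hmem : ∀ a ∈ Finset.Ico A (A + N), ∀ y ∈ P, y ∈ auxE L k a := by
      intro a ha y hy
      rw [Finset.mem_Ico] at ha
      exact auxE_mono L k a (A + N) (by omega) (hPE y hy)
    refine ⟨(Finset.Ico A (A + N) ×ˢ P).image (fun p => (1 + p.2) / (p.1 : ℝ)), ?_, ?_⟩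
    · rw [Finset.card_image_of_injOn, Finset.card_product, hP, Nat.card_Ico, pow_succ]
      · simp [mul_comm]
      · rintro ⟨a, y⟩ h1 ⟨a', y'⟩ h2 heq
        simp only [Finset.coe_product, Set.mem_prod, Finset.mem_coe] at h1 h2 heq
        have b1 := auxE_bound L k a (by have := Finset.mem_Ico.1 h1.1; omega) y
          (hmem a h1.1 y h1.2)
        have b2 := auxE_bound L k a' (by have := Finset.mem_Ico.1 h2.1; omega) y'
          (hmem a' h2.1 y' h2.2)
        have ha : 2 ≤ a := by have := Finset.mem_Ico.1 h1.1; omega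
        have ha' : 2 ≤ a' := by have := Finset.mem_Ico.1 h2.1; omega
        have c1 := ceil_eq a ha y b1.1 b1.2
        have c2 := ceil_eq a' ha' y' b2.1 b2.2
        have s1 := step_eq a ha y b1.1 b1.2
        have s2 := step_eq a' ha' y' b2.1 b2.2
        rw [heq] at c1 s1
        have : a = a' := by exact_mod_cast c1.symm.trans c2
        rw [this, s1.symm.trans s2]
    · intro x hx
      rw [Finset.mem_image] at hx
      obtain ⟨⟨a, y⟩, hp, rfl⟩ := hx
      rw [Finset.mem_product] at hp
      have ha := Finset.mem_Ico.1 hp.1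
      simp only at ha
      refine ⟨a, ha.1, by omega, y, hmem a hp.1 y hp.2, rfl⟩

lemma auxE_subset (L m : ℕ) (hm : 0 < m) : auxE L m 2 ⊆ EstarSet m := by
  intro x hx
  have hl := auxE_length L m 2 le_rfl x hx
  obtain ⟨n, D, hD, hDL, hxe⟩ := auxE_rat L m 2 le_rfl x hx
  have hb := auxE_bound L m 2 le_rfl x hx
  refine ⟨⟨(n : ℚ) / D, by rw [hxe]; push_cast; rfl⟩, ⟨?_, ?_⟩, hl⟩
  · simpa [engelIter] using hl.1 0 hm
  · have := hb.2
    norm_num at this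
    exact this.le

lemma lower_bound (m : ℕ) (hm : 0 < m) : ∃ c t₀ : ℝ, 0 < c ∧ 0 < t₀ ∧ ∀ t : ℝ, 0 < t → t ≤ t₀ →
    ENNReal.ofReal (c * t) ≤ volume (closedNbhd (EstarSet m) (t ^ (m+1))) := by
  refine ⟨2 / (4 * ((m : ℝ) + 2)) ^ m, 1 / (2 * ((m : ℝ) + 2)), by positivity, by positivity,
    fun t ht ht0 => ?_⟩
  set δ := t ^ (m + 1) with hδ
  have hδ0 : 0 < δ := by positivity
  set r : ℝ := 1 / (2 * ((m : ℝ) + 2) * t) with hr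
  have hr1 : 1 ≤ r := by
    rw [hr, le_div_iff₀ (by positivity)]
    rw [le_div_iff₀ (by positivity)] at ht0
    linarith
  obtain ⟨N, hN⟩ : ∃ N, N = ⌊r⌋₊ := ⟨_, rfl⟩
  have hN1 : 1 ≤ N := by rw [hN]; exact Nat.one_le_floor_iff _ |>.2 hr1
  have hN0 : (1 : ℝ) ≤ N := by exact_mod_cast hN1
  have hNr : (N : ℝ) ≤ r := by rw [hN]; exact Nat.floor_le (by positivity)
  have hrN : r / 2 ≤ N := by
    have : r < N + 1 := by rw [hN]; exact Nat.lt_floor_add_one _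
    linarith
  obtain ⟨P, hP, hPE⟩ := auxE_count (2 + m * N) N m 2 le_rfl le_rfl
  have hL : ((2 + m * N : ℕ) : ℝ) ≤ 1 / (2 * t) := by
    push_cast
    calc (2 : ℝ) + m * N ≤ (m + 2) * N := by nlinarith
      _ ≤ (m + 2) * r := by gcongr
      _ = _ := by rw [hr]; field_simp
  have hsep : 2 * δ < 1 / ((2 + m * N : ℕ) : ℝ) ^ (m + 1) := by
    have h1 : (1 / (1 / (2 * t))) ^ (m + 1) ≤ (1 / ((2 + m * N : ℕ) : ℝ)) ^ (m + 1) := by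
      have : (0 : ℝ) < ((2 + m * N : ℕ) : ℝ) := by positivity
      gcongr
    rw [one_div_one_div, one_div_pow, mul_pow, ← hδ] at h1
    have h2 : (4 : ℝ) ≤ 2 ^ (m + 1) := by
      calc (4 : ℝ) = 2 ^ (1 + 1) := by norm_num
        _ ≤ _ := pow_le_pow_right₀ (by norm_num) (by omega)
    nlinarith
  have hsub : (⋃ p ∈ P, Metric.closedBall p δ) ⊆ closedNbhd (EstarSet m) δ := by
    intro x hx
    simp only [mem_iUnion, Metric.mem_closedBall, Real.dist_eq] at hx
    obtain ⟨p, hp, hx⟩ := hx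
    exact ⟨p, auxE_subset _ m hm (hPE p hp), hx⟩
  refine le_trans ?_ (measure_mono hsub)
  rw [measure_biUnion_finset]
  · simp only [Real.volume_closedBall, Finset.sum_const, hP, nsmul_eq_mul]
    rw [← ENNReal.ofReal_natCast, ← ENNReal.ofReal_mul (by positivity)]
    apply ENNReal.ofReal_le_ofReal
    push_cast
    calc 2 / (4 * ((m : ℝ) + 2)) ^ m * t = (r / 2) ^ m * (2 * δ) := by
          rw [hr, hδ, pow_succ]
          have : 1 / (2 * ((m : ℝ) + 2) * t) / 2 = 1 / ((4 * ((m : ℝ) + 2)) * t) := by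
            field_simp; ring
          rw [this, one_div_pow, mul_pow _ t]
          field_simp
      _ ≤ _ := by gcongr
  · intro p hp q hq hpq
    have := auxE_sep _ m 2 le_rfl p (hPE p hp) q (hPE q hq) hpq
    apply Metric.closedBall_disjoint_closedBall
    rw [Real.dist_eq]
    linarith
  · intro p _
    exact Metric.isClosed_closedBall.measurableSet

lemma log_squeeze (v : ℝ → ℝ) (m : ℕ) (c C t₀ : ℝ) (hc : 0 < c) (hC : 0 < C) (ht₀ : 0 < t₀)
    (h : ∀ t, 0 < t → t ≤ t₀ → c * t ≤ v (t ^ (m+1)) ∧ v (t ^ (m+1)) ≤ C * t) :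
    Tendsto (fun δ : ℝ => Real.log (v δ) / Real.log δ)
      (nhdsWithin (0 : ℝ) (Set.Ioi 0)) (nhds ((1 : ℝ) / (m + 1))) := by
  set s : ℝ := 1 / (m + 1) with hs
  have hlim : ∀ K : ℝ, Tendsto (fun δ : ℝ => K / Real.log δ + s)
      (nhdsWithin (0 : ℝ) (Set.Ioi 0)) (nhds s) := by
    intro K
    have : Tendsto (fun δ : ℝ => K / Real.log δ) (nhdsWithin (0 : ℝ) (Set.Ioi 0)) (nhds 0) :=
      Real.tendsto_log_nhdsGT_zero.const_div_atBot K
    simpa using this.add_const s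
  have hev : ∀ᶠ δ : ℝ in nhdsWithin (0 : ℝ) (Set.Ioi 0), δ ∈ Ioo 0 (min 1 (t₀ ^ (m+1))) :=
    Ioo_mem_nhdsGT (by positivity)
  have key : ∀ δ ∈ Ioo (0 : ℝ) (min 1 (t₀ ^ (m+1))),
      Real.log c + s * Real.log δ ≤ Real.log (v δ) ∧
      Real.log (v δ) ≤ Real.log C + s * Real.log δ := by
    intro δ hδ
    have h0 : 0 < δ := hδ.1
    have h2 : δ ≤ t₀ ^ (m+1) := (hδ.2.trans_le (min_le_right _ _)).le
    have hpos : 0 < δ ^ s := by positivity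
    have e : (δ ^ s) ^ (m + 1) = δ := by
      rw [hs, ← Real.rpow_natCast, ← Real.rpow_mul h0.le]
      push_cast
      rw [one_div_mul_cancel (by positivity), Real.rpow_one]
    have hle : δ ^ s ≤ t₀ := by
      apply le_of_pow_le_pow_left₀ (n := m + 1) (by omega) ht₀.le
      rw [e]; exact h2
    obtain ⟨ha, hb⟩ := h _ hpos hle
    rw [e] at ha hb
    have hl : Real.log (δ ^ s) = s * Real.log δ := Real.log_rpow h0 s
    rw [← hl, ← Real.log_mul hc.ne' hpos.ne', ← Real.log_mul hC.ne' hpos.ne']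
    have : 0 < c * δ ^ s := by positivity
    exact ⟨Real.log_le_log this ha, Real.log_le_log (this.trans_le ha) hb⟩
  refine tendsto_of_tendsto_of_tendsto_of_le_of_le' (hlim (Real.log C)) (hlim (Real.log c)) ?_ ?_
  all_goals
    filter_upwards [hev] with δ hδ
    have hneg : Real.log δ < 0 := Real.log_neg hδ.1 (hδ.2.trans_le (min_le_left _ _))
    have := key δ hδ
    rw [div_add' _ _ _ hneg.ne, div_le_div_right_of_neg hneg]
    linarith [this.1, this.2]

/-- The Minkowski dimension of `E_m^*` is `m/(m+1)`:
`lim_{δ → 0⁺} log λ(V_δ(E_m^*)) / log δ = 1/(m+1)`. -/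
theorem minkowski_dim_Estar (m : ℕ) (hm : 0 < m) :
    Tendsto (fun δ : ℝ => Real.log (volume (closedNbhd (EstarSet m) δ)).toReal / Real.log δ)
      (nhdsWithin (0 : ℝ) (Set.Ioi 0)) (nhds ((1 : ℝ) / (m + 1))) := by
  obtain ⟨C, hC, hup⟩ := upper_bound m
  obtain ⟨c, t₀, hc, ht₀, hlo⟩ := lower_bound m hm
  refine log_squeeze (fun δ => (volume (closedNbhd (EstarSet m) δ)).toReal) m c C (min t₀ 1)
    hc hC (by positivity) ?_
  intro t ht htt
  have h1 : volume (closedNbhd (EstarSet m) (t ^ (m+1))) ≤ ENNReal.ofReal (C * t) := by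
    refine (measure_mono ?_).trans (hup t ht (htt.trans (min_le_right _ _)))
    rintro x ⟨y, hy, hxy⟩
    exact ⟨y, auxS_of_engel m y hy.2.1.2 hy.2.2, hxy⟩
  have h2 := hlo t ht (htt.trans (min_le_left _ _))
  constructor
  · exact (ENNReal.ofReal_le_iff_le_toReal (h1.trans_lt ENNReal.ofReal_lt_top).ne).1 h2
  · exact ENNReal.toReal_le_of_le_ofReal (by positivity) h1
end

section
/- Let m, n be positive integers, let 0 ≤ k ≤ m, and let a ∈ S_{m−k} satisfy π(a) ≤ n^m. Then Y_{m,a} can be covered by at most (2m·log n + 8)^k · (n^m / π(a)) closed intervals of length n^{−2m}, where log denotes the natural logarithm. -/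
open Set

/-- The value `g(a₁ ⋯ a_k) = 1/(a₁ + 1/(a₂ + ⋯ + 1/a_k))` of a finite continued fraction,
with `g(∅) = 0`. -/
noncomputable def cfVal : List ℕ → ℝ
  | [] => 0
  | a :: t => 1 / ((a : ℝ) + cfVal t)

/-- A word of positive integers whose last letter (if any) is at least `2`
(so a member of `S_k` when it has length `k`). -/
def isCFWord (a : List ℕ) : Prop := (∀ x ∈ a, 1 ≤ x) ∧ ∀ ℓ ∈ a.getLast?, 2 ≤ ℓ

/-- `Y_{m,a} = {g(b) : b ∈ T_{m,a}}`, where `T_{m,a}` is the set of words `b ∈ S_m`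
having `a` as a prefix. -/
def Yset (m : ℕ) (a : List ℕ) : Set ℝ :=
  {x : ℝ | ∃ b : List ℕ, b.length = m ∧ isCFWord b ∧ a <+: b ∧ x = cfVal b}

/-- `Ω` can be covered by at most `B` closed intervals of length `r`. -/
def CoveredBy (Ω : Set ℝ) (r B : ℝ) : Prop :=
  ∃ t : Finset ℝ, (t.card : ℝ) ≤ B ∧ Ω ⊆ ⋃ c ∈ t, Set.Icc c (c + r)

theorem cfVal_nonneg' : ∀ a : List ℕ, 0 ≤ cfVal a
  | [] => le_refl _
  | a :: t => by
    have := cfVal_nonneg' t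
    simp only [cfVal]
    positivity

theorem cfVal_contract (b : List ℕ) : ∀ a : List ℕ, (∀ x ∈ a, 1 ≤ x) →
    |cfVal (a ++ b) - cfVal a| ≤ cfVal b / (a.prod : ℝ) ^ 2
  | [], _ => by
    have := cfVal_nonneg' b
    simp [cfVal, abs_of_nonneg this]
  | a :: t, h => by
    have ih := cfVal_contract b t (fun x hx => h x (List.mem_cons_of_mem _ hx))
    have ha : (1 : ℝ) ≤ a := by exact_mod_cast h a List.mem_cons_self
    have h1 := cfVal_nonneg' (t ++ b)
    have h2 := cfVal_nonneg' t
    simp only [List.cons_append, cfVal, List.prod_cons, Nat.cast_mul]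
    set u := cfVal (t ++ b)
    set v := cfVal t
    have e : 1 / ((a : ℝ) + u) - 1 / (a + v) = (v - u) / ((a + u) * (a + v)) := by
      have : (a : ℝ) + u ≠ 0 := by positivity
      have : (a : ℝ) + v ≠ 0 := by positivity
      field_simp
      ring
    have hp : 0 < ((a : ℝ) + u) * (a + v) := by positivity
    rw [e, abs_div, abs_of_pos hp, abs_sub_comm, mul_pow, mul_comm ((a : ℝ) ^ 2), ← div_div (cfVal b)]
    apply div_le_div₀ (le_trans (abs_nonneg _) ih) ih (by positivity)
    nlinarith

theorem coveredBy_Icc (c w r : ℝ) (hw : 0 ≤ w) (hr : 0 < r) :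
    CoveredBy (Set.Icc (c - w * r) (c + w * r)) r (2 * w + 1) := by
  refine ⟨(Finset.range (⌊2 * w⌋₊ + 1)).image (fun i : ℕ => c - w * r + i * r), ?_, ?_⟩
  · have h1 : ((Finset.range (⌊2 * w⌋₊ + 1)).image
        (fun i : ℕ => c - w * r + i * r)).card ≤ ⌊2 * w⌋₊ + 1 := by
      simpa using (Finset.card_image_le (s := Finset.range (⌊2 * w⌋₊ + 1))
        (f := fun i : ℕ => c - w * r + i * r))
    have h2 : (⌊2 * w⌋₊ : ℝ) ≤ 2 * w := Nat.floor_le (by positivity)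
    have h3 : (((Finset.range (⌊2 * w⌋₊ + 1)).image
        (fun i : ℕ => c - w * r + i * r)).card : ℝ) ≤ ⌊2 * w⌋₊ + 1 := by exact_mod_cast h1
    linarith
  · rintro x ⟨hx1, hx2⟩
    have hy0 : 0 ≤ (x - (c - w * r)) / r := div_nonneg (by linarith) hr.le
    have hy1 : (x - (c - w * r)) / r ≤ 2 * w := by
      rw [div_le_iff₀ hr]; linarith
    have hf1 := Nat.floor_le hy0
    have hf2 := (Nat.lt_floor_add_one ((x - (c - w * r)) / r)).le
    have hf3 := Nat.floor_le_floor hy1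
    rw [le_div_iff₀ hr] at hf1
    rw [div_le_iff₀ hr] at hf2
    simp only [Set.mem_iUnion, Finset.mem_image, Finset.mem_range]
    refine ⟨_, ⟨⌊(x - (c - w * r)) / r⌋₊, by omega, rfl⟩, ?_, ?_⟩
    · linarith
    · linarith

theorem cf_key (N : ℕ) (hN : 0 < N) (L : ℝ) (hL : 4 + Real.log N ≤ L) (k : ℕ) :
    ∀ a : List ℕ, (∀ x ∈ a, 1 ≤ x) → a.prod ≤ N →
      CoveredBy (Yset (a.length + k) a) (((N : ℝ) ^ 2)⁻¹) (L ^ k * ((N : ℝ) / (a.prod : ℝ))) := by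
  have hN' : (0 : ℝ) < N := by exact_mod_cast hN
  have hlogN : 0 ≤ Real.log N := Real.log_natCast_nonneg N
  induction k with
  | zero =>
    intro a ha hp
    have hpos : 0 < a.prod := List.prod_pos (fun x hx => ha x hx)
    have hpos' : (0 : ℝ) < a.prod := by exact_mod_cast hpos
    refine ⟨{cfVal a}, ?_, ?_⟩
    · simp only [Finset.card_singleton, Nat.cast_one, pow_zero, one_mul]
      rw [le_div_iff₀ hpos', one_mul]
      exact_mod_cast hp
    · rintro x ⟨b, hb, -, hab, rfl⟩
      have : a = b := hab.eq_of_length (by omega)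
      subst this
      simp only [Finset.mem_singleton, Set.iUnion_iUnion_eq_left, Set.mem_Icc, le_refl, true_and]
      have : 0 ≤ ((N : ℝ) ^ 2)⁻¹ := by positivity
      linarith
  | succ k ih =>
    intro a ha hp
    have hpos : 0 < a.prod := List.prod_pos (fun x hx => ha x hx)
    have hpos' : (0 : ℝ) < a.prod := by exact_mod_cast hpos
    set P := a.prod with hP
    set X := N / P with hX
    have hw1 : (1 : ℝ) ≤ N / P := by
      rw [le_div_iff₀ hpos', one_mul]; exact_mod_cast hp
    have ih' : ∀ x : ℕ, ∃ t : Finset ℝ, (x ∈ Finset.Icc 1 X →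
        (t.card : ℝ) ≤ L ^ k * ((N : ℝ) / (P * x : ℝ)) ∧
        Yset (a.length + (k + 1)) (a ++ [x]) ⊆ ⋃ c ∈ t, Set.Icc c (c + ((N : ℝ) ^ 2)⁻¹)) := by
      intro x
      by_cases hx : x ∈ Finset.Icc 1 X
      · have hx' := Finset.mem_Icc.1 hx
        obtain ⟨t, h1, h2⟩ := ih (a ++ [x]) (by
          intro y hy
          rcases List.mem_append.1 hy with h | h
          · exact ha y h
          · rw [List.mem_singleton.1 h]; exact hx'.1) (by
          rw [List.prod_append, List.prod_singleton, ← hP, mul_comm]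
          exact (Nat.le_div_iff_mul_le hpos).1 hx'.2)
        refine ⟨t, fun _ => ⟨?_, ?_⟩⟩
        · rw [List.prod_append, List.prod_singleton, ← hP] at h1
          push_cast at h1
          exact h1
        · have e : (a ++ [x]).length + k = a.length + (k + 1) := by simp; omega
          rw [e] at h2
          exact h2
      · exact ⟨∅, fun h => absurd h hx⟩
    choose T hT using ih'
    obtain ⟨t0, ht0, hc0⟩ := coveredBy_Icc (cfVal a) ((N : ℝ) / P) (((N : ℝ) ^ 2)⁻¹)
      (by positivity) (by positivity)
    refine ⟨(Finset.Icc 1 X).biUnion T ∪ t0, ?_, ?_⟩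
    · have hL0 : 1 ≤ L := by linarith
      have hLk : 1 ≤ L ^ k := one_le_pow₀ hL0
      have c1 : (((Finset.Icc 1 X).biUnion T ∪ t0).card : ℝ)
          ≤ (∑ x ∈ Finset.Icc 1 X, ((T x).card : ℝ)) + t0.card := by
        have := (Finset.card_union_le ((Finset.Icc 1 X).biUnion T) t0).trans
          (Nat.add_le_add_right Finset.card_biUnion_le _)
        exact_mod_cast this
      have c2 : (∑ x ∈ Finset.Icc 1 X, ((T x).card : ℝ))
          ≤ ∑ x ∈ Finset.Icc 1 X, L ^ k * ((N : ℝ) / P) * ((x : ℝ))⁻¹ := by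
        apply Finset.sum_le_sum
        intro x hx
        refine (hT x hx).1.trans (le_of_eq ?_)
        rw [← div_div]; ring
      rw [← Finset.mul_sum] at c2
      have c3 : (∑ x ∈ Finset.Icc 1 X, ((x : ℝ))⁻¹) ≤ 1 + Real.log N := by
        have h := harmonic_le_one_add_log X
        rw [harmonic_eq_sum_Icc] at h
        push_cast at h
        have hX0 : 0 < X := Nat.div_pos hp hpos
        have : Real.log X ≤ Real.log N := Real.log_le_log (by exact_mod_cast hX0)
          (by exact_mod_cast Nat.div_le_self N P)
        linarith
      have c4 := mul_le_mul_of_nonneg_left c3 (show 0 ≤ L ^ k * ((N : ℝ) / P) by positivity)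
      have c5 : 3 * ((N : ℝ) / P) ≤ 3 * (L ^ k * ((N : ℝ) / P)) := by nlinarith
      have c6 := mul_le_mul_of_nonneg_left hL (show 0 ≤ L ^ k * ((N : ℝ) / P) by positivity)
      calc _ ≤ _ := c1
        _ ≤ L ^ k * ((N : ℝ) / P) * L := by linarith
        _ = _ := by ring
    · rintro y ⟨b, hb, hbw, ⟨s, rfl⟩, rfl⟩
      cases s with
      | nil => simp at hb
      | cons x s =>
        rw [Finset.set_biUnion_union]
        have hx1 : 1 ≤ x := hbw.1 x (by simp)
        by_cases hxX : x ≤ X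
        · left
          have hx : x ∈ Finset.Icc 1 X := Finset.mem_Icc.2 ⟨hx1, hxX⟩
          have := (hT x hx).2 ⟨a ++ x :: s, hb, hbw, ⟨s, by simp⟩, rfl⟩
          simp only [Set.mem_iUnion] at this ⊢
          obtain ⟨c, hc, hm⟩ := this
          exact ⟨c, Finset.mem_biUnion.2 ⟨x, hx, hc⟩, hm⟩
        · right
          apply hc0
          have hlt : N < x * P := (Nat.div_lt_iff_lt_mul hpos).1 (not_le.1 hxX)
          have hlt' : (N : ℝ) < x * P := by exact_mod_cast hlt
          have hxr : (0 : ℝ) < x := by exact_mod_cast hx1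
          have hs := cfVal_nonneg' s
          have htail : cfVal (x :: s) ≤ P / N := by
            simp only [cfVal]
            rw [div_le_div_iff₀ (by positivity) hN']
            nlinarith
          have hcon := cfVal_contract (x :: s) a ha
          have hb2 : cfVal (x :: s) / (P : ℝ) ^ 2 ≤ (N : ℝ) / P * ((N : ℝ) ^ 2)⁻¹ := by
            calc _ ≤ (P / N : ℝ) / (P : ℝ) ^ 2 := by gcongr
              _ = _ := by field_simp
          have h3 := abs_le.1 (hcon.trans hb2)
          constructor
          · linarith [h3.1]
          · linarith [h3.2]

theorem cf_covering_count (m n : ℕ) (hm : 0 < m) (hn : 0 < n) (k : ℕ) (hk : k ≤ m)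
    (a : List ℕ) (hlen : a.length = m - k) (haS : isCFWord a) (hπ : a.prod ≤ n ^ m) :
    CoveredBy (Yset m a) (((n : ℝ) ^ (2 * m))⁻¹)
      ((2 * (m : ℝ) * Real.log n + 8) ^ k * ((n : ℝ) ^ m / (a.prod : ℝ))) := by
  have hlog : 0 ≤ (m : ℝ) * Real.log n :=
    mul_nonneg (Nat.cast_nonneg m) (Real.log_natCast_nonneg n)
  have h := cf_key (n ^ m) (pow_pos hn m) (2 * (m : ℝ) * Real.log n + 8) (by
    push_cast
    rw [Real.log_pow]
    linarith) k a haS.1 hπ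
  rw [hlen, Nat.sub_add_cancel hk] at h
  rw [Nat.cast_pow, ← pow_mul, mul_comm m 2] at h
  exact h
end
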